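/- For all integers n ≥ 1 and 0 ≤ k ≤ n with n + k even, the number of 231-avoiding involutions of {1,2,…,n} with exactly k fixed points equals 2^{(n-k-2)/2}·( C((n+k)/2, (n-k)/2) + C((n+k-2)/2, (n-k)/2) ), where for n - k = 0 the (possibly fractional) power of 2 times the bracket is interpreted via the exact equality 2·i_n^k(231) = 2^{(n-k)/2}·( C((n+k)/2,(n-k)/2) + C((n+k-2)/2,(n-k)/2) ); when n + k is odd this number is 0. -/

import Mathlib

/-- The number of fixed points of a permutation of `Fin n`. -/
def fixedPts {n : ℕ} (π : Equiv.Perm (Fin n)) : ℕ :=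
  (Finset.univ.filter fun i => π i = i).card

/-- A permutation is an involution if it is its own inverse. -/
def IsInvolution {n : ℕ} (π : Equiv.Perm (Fin n)) : Prop :=
  ∀ i, π (π i) = i

/-- A permutation of `Fin n` avoids the pattern 231. -/
def Avoids231 {n : ℕ} (π : Equiv.Perm (Fin n)) : Prop :=
  ¬ ∃ i₁ i₂ i₃ : Fin n, i₁ < i₂ ∧ i₂ < i₃ ∧ (π i₃ < π i₁ ∧ π i₁ < π i₂)

/-- `i_n^k(231)`: the number of 231-avoiding involutions of `{1, …, n}` with exactly
`k` fixed points. -/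
noncomputable def iCount231 (n k : ℕ) : ℕ :=
  Nat.card {π : Equiv.Perm (Fin n) // IsInvolution π ∧ Avoids231 π ∧ fixedPts π = k}

def PP (n : ℕ) (f : ℕ → ℕ) : Prop :=
  (∀ i, n ≤ i → f i = i) ∧ (∀ i, f (f i) = i) ∧
    ∀ i j k, i < j → j < k → f k < f i → f i < f j → False

def fixN (n : ℕ) (f : ℕ → ℕ) : ℕ := ∑ i ∈ Finset.range n, if f i = i then 1 else 0

def lay (a : ℕ) (g : ℕ → ℕ) (i : ℕ) : ℕ := if i ≤ a then a - i else g (i - (a + 1)) + (a + 1)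

theorem PP_lt {n : ℕ} {f : ℕ → ℕ} (h : PP n f) {i : ℕ} (hi : i < n) : f i < n := by
  by_contra hc
  have h1 := h.1 (f i) (by omega)
  have h2 := h.2.1 i
  omega

theorem PP_inj {n : ℕ} {f : ℕ → ℕ} (h : PP n f) {i j : ℕ} (hij : f i = f j) : i = j := by
  rw [← h.2.1 i, hij, h.2.1 j]

theorem PP_dec {n : ℕ} {f : ℕ → ℕ} (h : PP n f) {i j : ℕ} (hij : i < j) (hj : j ≤ f 0) :
    f j < f i := by
  have h0 : f (f 0) = 0 := h.2.1 0
  by_contra hc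
  have hne : f i ≠ f j := fun e => by have := PP_inj h e; omega
  rcases hj.lt_or_eq with hj | hj
  · have : f i ≠ f (f 0) := fun e => by have := PP_inj h e; omega
    exact h.2.2 i j (f 0) hij hj (by omega) (by omega)
  · rw [hj] at hc hne; omega

theorem PP_le {n : ℕ} {f : ℕ → ℕ} (h : PP n f) (i : ℕ) (hi : i ≤ f 0) : f i ≤ f 0 - i := by
  induction i with
  | zero => simp
  | succ i ih =>
    have := PP_dec h (Nat.lt_succ_self i) hi
    have := ih (by omega)
    simp only [Nat.succ_eq_add_one] at *
    omega

theorem PP_ge {n : ℕ} {f : ℕ → ℕ} (h : PP n f) (d : ℕ) (hd : d ≤ f 0) : d ≤ f (f 0 - d) := by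
  induction d with
  | zero => simp
  | succ d ih =>
    have := PP_dec h (show f 0 - (d+1) < f 0 - d by omega) (by omega)
    have := ih (by omega)
    omega

theorem PP_eq {n : ℕ} {f : ℕ → ℕ} (h : PP n f) (i : ℕ) (hi : i ≤ f 0) : f i = f 0 - i := by
  have h1 := PP_le h i hi
  have h2 := PP_ge h (f 0 - i) (by omega)
  rw [show f 0 - (f 0 - i) = i by omega] at h2
  omega

theorem PP_gt {n : ℕ} {f : ℕ → ℕ} (h : PP n f) (i : ℕ) (hi : f 0 < i) : f 0 < f i := by
  by_contra hc
  have h1 := PP_eq h (f i) (by omega)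
  rw [h.2.1] at h1
  omega

theorem lay_PP {n a : ℕ} {g : ℕ → ℕ} (ha : a ≤ n) (h : PP (n - a) g) : PP (n + 1) (lay a g) := by
  refine ⟨?_, ?_, ?_⟩
  · intro i hi
    have := h.1 (i - (a + 1)) (by omega)
    unfold lay
    rw [if_neg (by omega)]
    omega
  · intro i
    unfold lay
    by_cases hi : i ≤ a
    · rw [if_pos hi, if_pos (by omega)]; omega
    · rw [if_neg hi, if_neg (by omega), Nat.add_sub_cancel, h.2.1]; omega
  · intro i j k hij hjk
    have h3 := h.2.2 (i - (a + 1)) (j - (a + 1)) (k - (a + 1))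
    unfold lay
    intro h1 h2
    split_ifs at h1 h2 <;> try omega
    exact h3 (by omega) (by omega) (by omega) (by omega)

theorem lay_zero (a : ℕ) (g : ℕ → ℕ) : lay a g 0 = a := by simp [lay]

theorem lay_inj {a : ℕ} {g g' : ℕ → ℕ} (h : lay a g = lay a g') : g = g' := by
  funext i
  have := congrFun h (i + (a + 1))
  unfold lay at this
  rw [if_neg (by omega), if_neg (by omega), Nat.add_sub_cancel] at this
  omega

theorem lay_surj {n : ℕ} {f : ℕ → ℕ} (h : PP (n + 1) f) :
    ∃ g, f 0 ≤ n ∧ PP (n - f 0) g ∧ lay (f 0) g = f := by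
  have h0 : f 0 < n + 1 := PP_lt h (by omega)
  refine ⟨fun i => f (i + (f 0 + 1)) - (f 0 + 1), by omega, ⟨?_, ?_, ?_⟩, ?_⟩
  · intro i hi
    have := h.1 (i + (f 0 + 1)) (by omega)
    simp only
    omega
  · intro i
    have := PP_gt h (i + (f 0 + 1)) (by omega)
    simp only
    rw [Nat.sub_add_cancel (by omega), h.2.1]
    omega
  · intro i j k hij hjk
    have h3 := h.2.2 (i + (f 0 + 1)) (j + (f 0 + 1)) (k + (f 0 + 1)) (by omega) (by omega)
    have := PP_gt h (i + (f 0 + 1)) (by omega)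
    have := PP_gt h (j + (f 0 + 1)) (by omega)
    have := PP_gt h (k + (f 0 + 1)) (by omega)
    simp only
    intro h1 h2
    exact h3 (by omega) (by omega)
  · funext i
    unfold lay
    split_ifs with hi
    · exact (PP_eq h i hi).symm
    · have := PP_gt h i (by omega)
      simp only
      rw [Nat.sub_add_cancel (by omega : f 0 + 1 ≤ i)]
      omega

theorem fix_lay {n a : ℕ} (ha : a ≤ n) (g : ℕ → ℕ) :
    fixN (n + 1) (lay a g) = (if Even a then 1 else 0) + fixN (n - a) g := by
  unfold fixN
  rw [show n + 1 = (a + 1) + (n - a) by omega, Finset.sum_range_add]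
  congr 1
  · split_ifs with he
    · obtain ⟨b, hb⟩ := he
      rw [Finset.sum_eq_single b]
      · rw [if_pos]; unfold lay; rw [if_pos (by omega)]; omega
      · intro i hi hne
        rw [Finset.mem_range] at hi
        rw [if_neg]; unfold lay; rw [if_pos (by omega)]; omega
      · intro hb'; rw [Finset.mem_range] at hb'; omega
    · apply Finset.sum_eq_zero
      intro i hi
      rw [Finset.mem_range] at hi
      rw [if_neg]; unfold lay; rw [if_pos (by omega)]
      intro h; apply he; exact ⟨i, by omega⟩
  · have e : a + 1 + (n - a) - (a + 1) = n - a := by omega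
    try rw [e]
    apply Finset.sum_congr rfl
    intro i _
    have : lay a g (a + 1 + i) = g i + (a + 1) := by
      unfold lay
      rw [if_neg (by omega), show a + 1 + i - (a + 1) = i by omega]
    rw [this]
    congr 1
    apply propext
    omega

def SS (n : ℕ) (k : ℤ) : Type := {f : ℕ → ℕ // PP n f ∧ (fixN n f : ℤ) = k}

noncomputable def FF (n : ℕ) (k : ℤ) : ℕ := Nat.card (SS n k)

instance SS_finite (n : ℕ) (k : ℤ) : Finite (SS n k) := by
  apply Finite.of_injective
    (fun (f : SS n k) (i : Fin n) => (⟨f.1 i, PP_lt f.2.1 i.2⟩ : Fin n))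
  intro f g h
  apply Subtype.ext
  funext i
  by_cases hi : i < n
  · simpa using congrFun h ⟨i, hi⟩
  · rw [f.2.1.1 i (by omega), g.2.1.1 i (by omega)]

theorem FF_succ (n : ℕ) (k : ℤ) :
    FF (n + 1) k = ∑ a ∈ Finset.range (n + 1), FF (n - a) (k - if Even a then 1 else 0) := by
  rw [Finset.sum_range]
  unfold FF
  rw [← Nat.card_sigma]
  symm
  let F : (Σ a : Fin (n + 1), SS (n - a) (k - if Even (a : ℕ) then 1 else 0)) → SS (n + 1) k :=
    fun x => ⟨lay x.1 x.2.1, lay_PP (by omega) x.2.2.1, by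
      rw [fix_lay (by omega)]
      have := x.2.2.2
      push_cast
      omega⟩
  apply Nat.card_congr
  apply Equiv.ofBijective F
  constructor
  · rintro ⟨a, g, hg⟩ ⟨b, g', hg'⟩ h
    have h' : lay a g = lay b g' := congrArg Subtype.val h
    have hab : a = b := by
      have := congrFun h' 0
      rw [lay_zero, lay_zero] at this
      exact Fin.ext this
    subst hab
    have := lay_inj h'
    subst this
    rfl
  · rintro ⟨f, hf, hk⟩
    obtain ⟨g, h0, hg, hl⟩ := lay_surj hf
    have hfix := fix_lay h0 g
    rw [hl] at hfix
    refine ⟨⟨⟨f 0, by omega⟩, ⟨g, hg, ?_⟩⟩, Subtype.ext hl⟩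
    rw [← hk, hfix]
    push_cast
    simp

theorem FF_rec (n : ℕ) (k : ℤ) : FF (n + 3) k = FF (n + 2) (k - 1) + 2 * FF (n + 1) k := by
  rw [FF_succ (n + 2), Finset.sum_range_succ', Finset.sum_range_succ']
  have h := FF_succ n k
  simp [Nat.even_add_one]
  omega

theorem fixN_le (n : ℕ) (f : ℕ → ℕ) : fixN n f ≤ n := by
  unfold fixN
  rw [← Finset.card_filter]
  simpa using Finset.card_filter_le (Finset.range n) (fun i => f i = i)

theorem FF_neg (n : ℕ) (k : ℤ) (hk : k < 0 ∨ (n : ℤ) < k) : FF n k = 0 := by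
  unfold FF
  have : IsEmpty (SS n k) := ⟨fun f => by
    have h1 := f.2.2
    have h2 := fixN_le n f.1
    omega⟩
  exact Nat.card_of_isEmpty

theorem FF_zero : FF 0 0 = 1 := by
  unfold FF
  rw [Nat.card_eq_one_iff_unique]
  constructor
  · constructor
    intro f g
    apply Subtype.ext
    funext i
    rw [f.2.1.1 i (by omega), g.2.1.1 i (by omega)]
  · exact ⟨⟨id, ⟨fun _ _ => rfl, fun _ => rfl, fun i j k h1 h2 h3 h4 => by
      simp only [id] at *; omega⟩, by simp [fixN]⟩⟩

theorem FF_one (k : ℤ) : FF 1 k = FF 0 (k - 1) := by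
  rw [FF_succ]; simp

theorem FF_two (k : ℤ) : FF 2 k = FF 0 (k - 2) + FF 0 k := by
  rw [FF_succ, Finset.sum_range_succ, Finset.sum_range_one]
  simp [FF_one]
  congr 1; ring

theorem FF_odd (n : ℕ) : ∀ k : ℤ, (n + k) % 2 = 1 → FF n k = 0 := by
  induction n using Nat.strong_induction_on with
  | _ n ih =>
    intro k hk
    match n, ih, hk with
    | 0, _, hk => exact FF_neg _ _ (by push_cast at *; omega)
    | 1, _, hk => rw [FF_one]; exact FF_neg _ _ (by push_cast at *; omega)
    | 2, _, hk =>
      rw [FF_two, FF_neg _ _ (by push_cast at *; omega), FF_neg _ _ (by push_cast at *; omega)]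
    | n + 3, ih, hk =>
      rw [FF_rec, ih (n + 2) (by omega) _ (by push_cast at *; omega),
        ih (n + 1) (by omega) _ (by push_cast at *; omega)]

theorem FF_main (n : ℕ) : ∀ m k : ℕ, n = 2 * m + k → 1 ≤ n →
    2 * FF n k = 2 ^ m * ((m + k).choose m + (m + k - 1).choose m) := by
  induction n using Nat.strong_induction_on with
  | _ n ih =>
    intro m k hmk hn
    match n, ih, hmk, hn with
    | 1, _, hmk, _ =>
      obtain rfl : m = 0 := by omega
      obtain rfl : k = 1 := by omega
      rw [FF_one]; simp [FF_zero]
    | 2, _, hmk, _ =>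
      obtain ⟨rfl, rfl⟩ | ⟨rfl, rfl⟩ : (m = 0 ∧ k = 2) ∨ (m = 1 ∧ k = 0) := by omega
      · rw [FF_two, FF_neg 0 ((2 : ℕ) : ℤ) (by norm_num)]; simp [FF_zero]
      · rw [FF_two, FF_neg 0 _ (by norm_num)]; simp [FF_zero]
    | n + 3, ih, hmk, _ =>
      rw [FF_rec]
      rcases m with _ | m
      · obtain ⟨k, rfl⟩ : ∃ j, k = j + 1 := ⟨k - 1, by omega⟩
        have h1 := ih (n + 2) (by omega) 0 k (by omega) (by omega)
        rw [FF_neg (n + 1) _ (by push_cast; omega)]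
        simp at h1 ⊢
        omega
      · have h2 := ih (n + 1) (by omega) m k (by omega) (by omega)
        rcases k with _ | k
        · rw [FF_neg (n + 2) _ (by norm_num)]
          obtain ⟨j, rfl⟩ : ∃ j, m = j + 1 := ⟨m - 1, by omega⟩
          simp at h2 ⊢
          rw [pow_succ]
          omega
        · have h1 := ih (n + 2) (by omega) (m + 1) k (by omega) (by omega)
          rw [show m + 1 + (k + 1) - 1 = (m + k) + 1 by omega,
            show m + 1 + (k + 1) = (m + k + 1) + 1 by omega,
            Nat.choose_succ_succ (m + k + 1), Nat.choose_succ_succ (m + k)]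
          rw [show m + 1 + k - 1 = m + k by omega, show m + 1 + k = m + k + 1 by omega,
            Nat.choose_succ_succ (m + k)] at h1
          rw [show m + (k + 1) - 1 = m + k by omega, show m + (k + 1) = m + k + 1 by omega] at h2
          rw [show ((k + 1 : ℕ) : ℤ) - 1 = k by push_cast; ring, mul_add, h1, mul_left_comm, h2]
          simp only [Nat.succ_eq_add_one]
          ring

def extN {n : ℕ} (π : Equiv.Perm (Fin n)) (i : ℕ) : ℕ := if h : i < n then π ⟨i, h⟩ else i

theorem extN_val {n : ℕ} (π : Equiv.Perm (Fin n)) (i : Fin n) : extN π i = π i := by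
  simp [extN]

theorem extN_ge {n : ℕ} (π : Equiv.Perm (Fin n)) (i : ℕ) (h : n ≤ i) : extN π i = i := by
  simp [extN, h]

theorem extN_lt {n : ℕ} (π : Equiv.Perm (Fin n)) (i : ℕ) (h : i < n) : extN π i < n := by
  simp [extN, h]

theorem extN_fix {n : ℕ} (π : Equiv.Perm (Fin n)) : fixN n (extN π) = fixedPts π := by
  unfold fixN fixedPts
  rw [Finset.sum_range, Finset.card_filter]
  apply Finset.sum_congr rfl
  intro i _
  rw [extN_val]
  simp [Fin.ext_iff]

theorem extN_PP {n : ℕ} (π : Equiv.Perm (Fin n)) :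
    PP n (extN π) ↔ IsInvolution π ∧ Avoids231 π := by
  constructor
  · rintro ⟨-, h2, h3⟩
    refine ⟨fun i => ?_, ?_⟩
    · have := h2 i
      rw [extN_val, extN_val] at this
      exact Fin.ext this
    · rintro ⟨i, j, k, hij, hjk, h4, h5⟩
      apply h3 i j k hij hjk <;> rw [extN_val, extN_val]
      · exact h4
      · exact h5
  · rintro ⟨h2, h3⟩
    refine ⟨extN_ge π, fun i => ?_, fun i j k hij hjk h4 h5 => ?_⟩
    · by_cases hi : i < n
      · have := extN_val π ⟨i, hi⟩
        simp only at this
        rw [this, extN_val, h2]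
      · rw [extN_ge π i (by omega), extN_ge π i (by omega)]
    · by_cases hk : k < n
      · have e1 := extN_val π ⟨i, by omega⟩
        have e2 := extN_val π ⟨j, by omega⟩
        have e3 := extN_val π ⟨k, by omega⟩
        simp only at e1 e2 e3
        rw [e1, e2] at h5
        rw [e1, e3] at h4
        exact h3 ⟨⟨i, by omega⟩, ⟨j, by omega⟩, ⟨k, by omega⟩, hij, hjk, h4, h5⟩
      · rw [extN_ge π k (by omega)] at h4
        by_cases hi : i < n
        · have := extN_lt π i hi
          omega
        · rw [extN_ge π i (by omega)] at h4
          omega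

theorem iCount_eq (n k : ℕ) : iCount231 n k = FF n k := by
  unfold iCount231 FF
  let F : {π : Equiv.Perm (Fin n) // IsInvolution π ∧ Avoids231 π ∧ fixedPts π = k} → SS n k :=
    fun x => ⟨extN x.1, (extN_PP x.1).2 ⟨x.2.1, x.2.2.1⟩, by rw [extN_fix, x.2.2.2]⟩
  apply Nat.card_congr
  apply Equiv.ofBijective F
  constructor
  · intro x y h
    have h' : extN x.1 = extN y.1 := congrArg Subtype.val h
    apply Subtype.ext
    apply Equiv.ext
    intro i
    have := congrFun h' i
    rw [extN_val, extN_val] at this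
    exact Fin.ext this
  · rintro ⟨f, hf, hk⟩
    let g : Fin n → Fin n := fun i => ⟨f i, PP_lt hf i.2⟩
    have hg : ∀ i, g (g i) = i := fun i => Fin.ext (hf.2.1 i)
    let π : Equiv.Perm (Fin n) := ⟨g, g, hg, hg⟩
    have he : extN π = f := by
      funext i
      by_cases hi : i < n
      · exact extN_val π ⟨i, hi⟩
      · rw [extN_ge π i (by omega), hf.1 i (by omega)]
    have h1 := (extN_PP π).1 (by rw [he]; exact hf)
    have h2 := extN_fix π
    rw [he] at h2
    exact ⟨⟨π, h1.1, h1.2, by omega⟩, Subtype.ext he⟩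

/-- For all `n ≥ 1`, `0 ≤ k ≤ n` with `n + k` even,
`2 · i_n^k(231) = 2^{(n-k)/2} · ( C((n+k)/2, (n-k)/2) + C((n+k-2)/2, (n-k)/2) )`
(the exact form of `i_n^k(231) = 2^{(n-k-2)/2} · (…)`); when `n + k` is odd,
`i_n^k(231) = 0`. -/
theorem statement6 (n k : ℕ) (hn : 1 ≤ n) (hk : k ≤ n) :
    (Even (n + k) → 2 * iCount231 n k =
      2 ^ ((n - k) / 2) *
        (((n + k) / 2).choose ((n - k) / 2) + ((n + k - 2) / 2).choose ((n - k) / 2))) ∧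
    (Odd (n + k) → iCount231 n k = 0) := by
  rw [iCount_eq]
  constructor
  · rintro ⟨c, hc⟩
    have := FF_main n ((n - k) / 2) k (by omega) hn
    rw [this, show (n + k) / 2 = (n - k) / 2 + k by omega,
      show (n + k - 2) / 2 = (n - k) / 2 + k - 1 by omega]
  · rintro ⟨c, hc⟩
    exact FF_odd n k (by omega)
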